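/- Let μ be a Radon measure on Q_T that is absolutely continuous with respect to the parabolic capacity cap-bar. Then there exist positive Radon measures γ₁, γ₂ on Q_T which belong (as functionals) to L²(0,T;H⁻¹_ρ), and nonnegative functions α_i ∈ L¹_loc(Q_T,γ_i), i=1,2, such that dμ = α₁ dγ₁ − α₂ dγ₂. -/

import Mathlib

/- Self-contained formalization setting.

Notation: `Q_T = [0,T] × ℝ^d` is represented by `Set.Icc (0:ℝ) T ×ˢ Set.univ`
inside `ℝ × (Fin d → ℝ)`.  The weight `ρ(x) = (1+|x|²)^{-α}`. -/

open MeasureTheory Set Filter Topology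
open scoped ENNReal

noncomputable section

/-- The weight `ρ(x) = (1+|x|²)^(-α)`. -/
def rho {d : ℕ} (αe : ℝ) (x : Fin d → ℝ) : ℝ := (1 + ∑ i, (x i) ^ 2) ^ (-αe)

/-- `f ∈ 𝕃_{p,ρ}(Q_T)`, i.e. `f·ρ ∈ 𝕃_p(Q_T)`. -/
def MemLprho {d : ℕ} (T αe pe : ℝ) (f : ℝ → (Fin d → ℝ) → ℝ) : Prop :=
  Measurable (Function.uncurry f) ∧
    (∫⁻ q : ℝ × (Fin d → ℝ) in Icc (0:ℝ) T ×ˢ univ,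
      ENNReal.ofReal (|f q.1 q.2 * rho αe q.2| ^ pe)) < ⊤

/-- `f ∈ 𝕃_{2,ρ}(Q_T)`. -/
def MemL2rho {d : ℕ} (T αe : ℝ) (f : ℝ → (Fin d → ℝ) → ℝ) : Prop :=
  MemLprho T αe 2 f

/-- `f̄ ∈ 𝕃_{2,ρ}(Q_T; ℝ^d)` (componentwise). -/
def MemL2rhoVec {d : ℕ} (T αe : ℝ) (f : ℝ → (Fin d → ℝ) → Fin d → ℝ) : Prop :=
  ∀ i, MemL2rho T αe fun t x => f t x i

/-- `f̄ ∈ 𝕃_{p,ρ}(Q_T; ℝ^d)` (componentwise). -/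
def MemLprhoVec {d : ℕ} (T αe pe : ℝ) (f : ℝ → (Fin d → ℝ) → Fin d → ℝ) : Prop :=
  ∀ i, MemLprho T αe pe fun t x => f t x i

/-- The squared norm `‖f‖²_{2,ρ}` (as an extended real). -/
def l2rhoNormSq {d : ℕ} (T αe : ℝ) (f : ℝ → (Fin d → ℝ) → ℝ) : ℝ≥0∞ :=
  ∫⁻ q : ℝ × (Fin d → ℝ) in Icc (0:ℝ) T ×ˢ univ,
    ENNReal.ofReal ((f q.1 q.2) ^ 2 * (rho αe q.2) ^ 2)

/-- Squared `𝕃_{2,ρ}`-distance of two vector fields on `Q_T`. -/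
def l2rhoDistSq {d : ℕ} (T αe : ℝ) (f g : ℝ → (Fin d → ℝ) → Fin d → ℝ) : ℝ≥0∞ :=
  ∫⁻ q : ℝ × (Fin d → ℝ) in Icc (0:ℝ) T ×ˢ univ,
    ENNReal.ofReal ((∑ i, (f q.1 q.2 i - g q.1 q.2 i) ^ 2) * (rho αe q.2) ^ 2)

/-- Bounded Borel vector fields on `Q_T`. -/
def BddBorelVec {d : ℕ} (f : ℝ → (Fin d → ℝ) → Fin d → ℝ) : Prop :=
  (∀ i, Measurable fun q : ℝ × (Fin d → ℝ) => f q.1 q.2 i) ∧ ∃ C, ∀ t x i, |f t x i| ≤ C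

/-- Test functions `C_0^∞((0,T) × ℝ^d)`. -/
def IsTestQT {d : ℕ} (T : ℝ) (φ : ℝ × (Fin d → ℝ) → ℝ) : Prop :=
  ContDiff ℝ (⊤ : ℕ∞) φ ∧ HasCompactSupport φ ∧
    tsupport φ ⊆ Ioo (0:ℝ) T ×ˢ (univ : Set (Fin d → ℝ))

/-- Spatial partial derivative `∂φ/∂x_i`. -/
def dxi {d : ℕ} (φ : ℝ × (Fin d → ℝ) → ℝ) (q : ℝ × (Fin d → ℝ)) (i : Fin d) : ℝ :=
  fderiv ℝ φ q (0, Pi.single i 1)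

/-- Time derivative `∂φ/∂t`. -/
def dt' {d : ℕ} (φ : ℝ × (Fin d → ℝ) → ℝ) (q : ℝ × (Fin d → ℝ)) : ℝ :=
  fderiv ℝ φ q (1, 0)

/-- `du` is the (spatial) weak gradient of `u` on `(0,T) × ℝ^d`. -/
def IsWeakGrad {d : ℕ} (T : ℝ) (u : ℝ → (Fin d → ℝ) → ℝ)
    (du : ℝ → (Fin d → ℝ) → Fin d → ℝ) : Prop :=
  ∀ φ : ℝ × (Fin d → ℝ) → ℝ, IsTestQT T φ → ∀ i,
    (∫ q : ℝ × (Fin d → ℝ), u q.1 q.2 * dxi φ q i) =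
      - ∫ q : ℝ × (Fin d → ℝ), du q.1 q.2 i * φ q

/-- `g0 + div ḡ = f0 + div f̄` as distributions on `(0,T) × ℝ^d`. -/
def SameFunc {d : ℕ} (T : ℝ) (g0 : ℝ → (Fin d → ℝ) → ℝ) (gb : ℝ → (Fin d → ℝ) → Fin d → ℝ)
    (f0 : ℝ → (Fin d → ℝ) → ℝ) (fb : ℝ → (Fin d → ℝ) → Fin d → ℝ) : Prop :=
  ∀ φ : ℝ × (Fin d → ℝ) → ℝ, IsTestQT T φ →
    (∫ q : ℝ × (Fin d → ℝ), g0 q.1 q.2 * φ q) -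
        (∫ q : ℝ × (Fin d → ℝ), ∑ i, gb q.1 q.2 i * dxi φ q i) =
      (∫ q : ℝ × (Fin d → ℝ), f0 q.1 q.2 * φ q) -
        ∫ q : ℝ × (Fin d → ℝ), ∑ i, fb q.1 q.2 i * dxi φ q i

/-- The action of the functional `Φ = f⁰ + div f̄ ∈ 𝕃₂(0,T;H⁻¹_ρ)` on an element `η`
of `𝕃₂(0,T;H¹_ρ)` with weak spatial gradient `g`:
`Φ(η) = ⟨f⁰,η⟩_{2,ρ} − ⟨f̄, ∇(ρ²η)⟩₂`. -/
def pairing {d : ℕ} (T αe : ℝ) (f0 : ℝ → (Fin d → ℝ) → ℝ)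
    (fb : ℝ → (Fin d → ℝ) → Fin d → ℝ) (η : ℝ → (Fin d → ℝ) → ℝ)
    (g : ℝ → (Fin d → ℝ) → Fin d → ℝ) : ℝ :=
  (∫ q : ℝ × (Fin d → ℝ) in Icc (0:ℝ) T ×ˢ univ,
      f0 q.1 q.2 * η q.1 q.2 * (rho αe q.2) ^ 2)
    - ∫ q : ℝ × (Fin d → ℝ) in Icc (0:ℝ) T ×ˢ univ,
        ∑ i, fb q.1 q.2 i * ((rho αe q.2) ^ 2 * g q.1 q.2 i
          + η q.1 q.2 * fderiv ℝ (fun y : Fin d → ℝ => (rho αe y) ^ 2) q.2 (Pi.single i 1))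

/-- Action of `Φ = f⁰ + div f̄` on a smooth test function. -/
def pairingTest {d : ℕ} (T αe : ℝ) (f0 : ℝ → (Fin d → ℝ) → ℝ)
    (fb : ℝ → (Fin d → ℝ) → Fin d → ℝ) (φ : ℝ × (Fin d → ℝ) → ℝ) : ℝ :=
  pairing T αe f0 fb (fun t x => φ (t, x)) (fun t x i => dxi φ (t, x) i)

/-- The capacity `cap-bar` of a compact set `K ⊆ (0,T) × ℝ^d`:
`inf { ∫_{Q_T} |∇η|² : η ∈ C₀^∞((0,T)×ℝ^d), η ≥ 1 on K }`. -/
def capOfCompact {d : ℕ} (T : ℝ) (K : Set (ℝ × (Fin d → ℝ))) : ℝ≥0∞ :=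
  ⨅ (φ : ℝ × (Fin d → ℝ) → ℝ) (_ : IsTestQT T φ) (_ : ∀ q ∈ K, 1 ≤ φ q),
    ∫⁻ q : ℝ × (Fin d → ℝ), ENNReal.ofReal (∑ i, (dxi φ q i) ^ 2)

/-- The capacity `cap-bar`, extended to arbitrary sets in the standard way. -/
def capBar {d : ℕ} (T : ℝ) (B : Set (ℝ × (Fin d → ℝ))) : ℝ≥0∞ :=
  ⨅ (U : Set (ℝ × (Fin d → ℝ))) (_ : IsOpen U) (_ : B ⊆ U),
    ⨆ (K : Set (ℝ × (Fin d → ℝ))) (_ : IsCompact K)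
      (_ : K ⊆ U ∩ (Ioo (0:ℝ) T ×ˢ (univ : Set (Fin d → ℝ)))), capOfCompact T K

/-- A (positive Radon) measure `γ` on `Q_T` belongs, as a functional, to
`𝕃₂(0,T;H⁻¹_ρ)`: there are `f⁰, f̄ ∈ 𝕃_{2,ρ}(Q_T)` with `∫ φ dγ = (f⁰ + div f̄)(φ)`
for all test functions `φ`. -/
def MeasureRepHminus {d : ℕ} (T αe : ℝ) (γ : Measure (ℝ × (Fin d → ℝ))) : Prop :=
  ∃ f0 fb, MemL2rho T αe f0 ∧ MemL2rhoVec T αe fb ∧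
    ∀ φ : ℝ × (Fin d → ℝ) → ℝ, IsTestQT T φ → pairingTest T αe f0 fb φ = ∫ q, φ q ∂γ

/-- The squared `𝕃₂(0,T;H⁻¹_ρ)`-norm of (the functional represented by) a measure `μ`,
realized as the infimum over representations `μ = f⁰ + div f̄`. -/
def measNormStarSq {d : ℕ} (T αe : ℝ) (μ : Measure (ℝ × (Fin d → ℝ))) : ℝ≥0∞ :=
  ⨅ (f0 : ℝ → (Fin d → ℝ) → ℝ) (fb : ℝ → (Fin d → ℝ) → Fin d → ℝ)
    (_ : MemL2rho T αe f0) (_ : MemL2rhoVec T αe fb)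
    (_ : ∀ φ : ℝ × (Fin d → ℝ) → ℝ, IsTestQT T φ →
      pairingTest T αe f0 fb φ = ∫ q, φ q ∂μ),
    l2rhoNormSq T αe f0 + ∑ i, l2rhoNormSq T αe fun t x => fb t x i

/-- The class `S^c`:  positive Radon measures on `Q_T` whose restriction to
`(0,T) × ℝ^d` is absolutely continuous w.r.t. `cap-bar` and which do not charge
`{0} × ℝ^d` and `{T} × ℝ^d`. -/
def IsScMeasure {d : ℕ} (T : ℝ) (μ : Measure (ℝ × (Fin d → ℝ))) : Prop :=
  IsFiniteMeasureOnCompacts μ ∧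
  (∀ B : Set (ℝ × (Fin d → ℝ)), MeasurableSet B →
      B ⊆ Ioo (0:ℝ) T ×ˢ (univ : Set (Fin d → ℝ)) → capBar T B = 0 → μ B = 0) ∧
  μ ({(0:ℝ)} ×ˢ (univ : Set (Fin d → ℝ))) = 0 ∧
  μ ({T} ×ˢ (univ : Set (Fin d → ℝ))) = 0

/-- The class `S^c₀ = S^c ∩ 𝕃₂(0,T;H⁻¹_ρ)`. -/
def IsSc0Measure {d : ℕ} (T αe : ℝ) (μ : Measure (ℝ × (Fin d → ℝ))) : Prop :=
  IsScMeasure T μ ∧ MeasureRepHminus T αe μ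

theorem aux_greedy {X ι : Type*} [MeasurableSpace X] (ν : Measure X) [IsFiniteMeasure ν]
    (A : ι → Set X) (hA : ∀ i, MeasurableSet (A i)) (e : ι → ℝ≥0∞) (i0 : ι)
    (he0 : e i0 = 0) (c : ℝ≥0∞) :
    ∃ s : ℕ → ι, (∑' k, c * e (s k)) ≤ ν univ ∧
      ∀ i, ν (A i \ ⋃ k, A (s k)) ≤ c * e i := by
  classical
  have step : ∀ B : Set X, ∃ i, c * e i ≤ ν (A i \ B) ∧
      ∀ j, c * e j ≤ ν (A j \ B) → ν (A j \ B) ≤ 2 * ν (A i \ B) := by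
    intro B
    set S : ℝ≥0∞ := ⨆ (j : ι) (_ : c * e j ≤ ν (A j \ B)), ν (A j \ B) with hS
    have hle : ∀ j, c * e j ≤ ν (A j \ B) → ν (A j \ B) ≤ S := fun j hj =>
      le_iSup₂ (f := fun (j : ι) (_ : c * e j ≤ ν (A j \ B)) => ν (A j \ B)) j hj
    have hSfin : S ≠ ⊤ := by
      have : S ≤ ν univ := iSup₂_le fun j _ => measure_mono (subset_univ _)
      exact (this.trans_lt (measure_lt_top ν univ)).ne
    rcases eq_or_ne S 0 with h0 | h0
    · refine ⟨i0, by simp [he0], fun j hj => ?_⟩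
      have := hle j hj
      rw [h0] at this
      exact this.trans zero_le
    · have hlt : S / 2 < S := ENNReal.half_lt_self h0 hSfin
      obtain ⟨i, hi⟩ := lt_iSup_iff.1 (hlt.trans_eq hS)
      obtain ⟨hi, hi'⟩ := lt_iSup_iff.1 hi
      refine ⟨i, hi, fun j hj => (hle j hj).trans ?_⟩
      rw [mul_comm]
      exact (ENNReal.div_le_iff (by simp) (by simp)).1 hi'.le
  choose f hf1 hf2 using step
  let B : ℕ → Set X := fun n => Nat.rec ∅ (fun _ b => b ∪ A (f b)) n
  have hB0 : B 0 = ∅ := rfl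
  have hBs : ∀ n, B (n+1) = B n ∪ A (f (B n)) := fun n => rfl
  have hBmono : Monotone B := monotone_nat_of_le_succ fun n => by
    rw [hBs]; exact subset_union_left
  have hBm : ∀ n, MeasurableSet (B n) := by
    intro n
    induction n with
    | zero => rw [hB0]; exact MeasurableSet.empty
    | succ n ih => rw [hBs]; exact ih.union (hA _)
  have hBsub : ∀ n, B n ⊆ ⋃ k, A (f (B k)) := by
    intro n
    induction n with
    | zero => rw [hB0]; exact empty_subset _
    | succ n ih => rw [hBs]; exact union_subset ih (subset_iUnion (fun k => A (f (B k))) n)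
  let a : ℕ → ℝ≥0∞ := fun k => ν (A (f (B k)) \ B k)
  have hsum : ∑' k, a k ≤ ν univ := by
    have hd : Pairwise (Function.onFun Disjoint fun k => A (f (B k)) \ B k) := by
      have key : ∀ i j, i < j → Disjoint (A (f (B i)) \ B i) (A (f (B j)) \ B j) := by
        intro i j hij
        refine Set.disjoint_left.2 fun x hx hx' => hx'.2 ?_
        have h1 : x ∈ B (i+1) := by rw [hBs]; exact Or.inr hx.1
        exact hBmono hij h1
      intro i j hij
      rcases lt_or_gt_of_ne hij with h | h
      · exact key i j h
      · exact (key j i h).symm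
    rw [← measure_iUnion hd fun k => (hA _).diff (hBm _)]
    exact measure_mono (subset_univ _)
  refine ⟨fun k => f (B k), (ENNReal.tsum_le_tsum fun k => hf1 (B k)).trans hsum, fun i => ?_⟩
  by_contra hcon
  push Not at hcon
  have hbad : ∀ k, ν (A i \ ⋃ k, A (f (B k))) ≤ 2 * a k := by
    intro k
    have h1 : ν (A i \ ⋃ k, A (f (B k))) ≤ ν (A i \ B k) :=
      measure_mono (sdiff_subset_sdiff_right (hBsub k))
    exact h1.trans (hf2 (B k) i (hcon.le.trans h1))
  have hlim : Tendsto (fun k => 2 * a k) atTop (𝓝 0) := by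
    have := ENNReal.tendsto_atTop_zero_of_tsum_ne_top
      (hsum.trans_lt (measure_lt_top ν univ)).ne
    simpa using ENNReal.Tendsto.const_mul this (Or.inr (by simp : (2:ℝ≥0∞) ≠ ⊤))
  have h0 : ν (A i \ ⋃ k, A (f (B k))) ≤ 0 := ge_of_tendsto' hlim hbad
  exact absurd (hcon.trans_le h0) (by simp)

/-- Dirichlet energy. -/
def aux_G {d : ℕ} (φ : ℝ × (Fin d → ℝ) → ℝ) : ℝ≥0∞ :=
  ∫⁻ q : ℝ × (Fin d → ℝ), ENNReal.ofReal (∑ i, (dxi φ q i) ^ 2)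

theorem aux_test_of_zero {d : ℕ} {T : ℝ} {ι : Type*} [Finite ι]
    {φ : ι → ℝ × (Fin d → ℝ) → ℝ}
    (hφ : ∀ k, IsTestQT T (φ k)) {ψ : ℝ × (Fin d → ℝ) → ℝ}
    (hψ : ContDiff ℝ (⊤ : ℕ∞) ψ) (h0 : ∀ q, (∀ k, φ k q = 0) → ψ q = 0) : IsTestQT T ψ := by
  have hcl : IsCompact (⋃ k, tsupport (φ k)) := isCompact_iUnion fun k => (hφ k).2.1
  have hsub : Function.support ψ ⊆ ⋃ k, tsupport (φ k) := by
    intro q hq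
    by_contra hcon
    apply hq
    refine h0 q fun k => ?_
    by_contra hk
    exact hcon (mem_iUnion.2 ⟨k, subset_tsupport _ hk⟩)
  have hts : tsupport ψ ⊆ ⋃ k, tsupport (φ k) := closure_minimal hsub hcl.isClosed
  exact ⟨hψ, hcl.of_isClosed_subset (isClosed_tsupport _) hts,
    hts.trans (iUnion_subset fun k => (hφ k).2.2)⟩

theorem aux_smul {d : ℕ} {T : ℝ} {φ : ℝ × (Fin d → ℝ) → ℝ} (hφ : IsTestQT T φ) (c : ℝ) :
    IsTestQT T (fun q => c * φ q) ∧ ∀ q i, dxi (fun q => c * φ q) q i = c * dxi φ q i := by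
  constructor
  · exact aux_test_of_zero (ι := Unit) (φ := fun _ => φ) (fun _ => hφ)
      (contDiff_const.mul hφ.1) (fun q h => by simp [h ()])
  · intro q i
    have hd : DifferentiableAt ℝ φ q := hφ.1.differentiable (by simp) q
    unfold dxi
    rw [fderiv_const_mul hd]
    rfl

theorem aux_G_smul {d : ℕ} {T : ℝ} {φ : ℝ × (Fin d → ℝ) → ℝ} (hφ : IsTestQT T φ) (c : ℝ) :
    aux_G (fun q => c * φ q) = ENNReal.ofReal (c^2) * aux_G φ := by
  unfold aux_G
  rw [← lintegral_const_mul' _ _ (by simp)]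
  congr 1; ext q
  rw [← ENNReal.ofReal_mul (sq_nonneg c)]
  congr 1
  rw [Finset.mul_sum]
  refine Finset.sum_congr rfl fun i _ => ?_
  rw [(aux_smul hφ c).2]; ring

theorem aux_dxi_cont {d : ℕ} {T : ℝ} {φ : ℝ × (Fin d → ℝ) → ℝ} (hφ : IsTestQT T φ) (i : Fin d) :
    Continuous fun q => dxi φ q i := by
  unfold dxi
  exact (hφ.1.continuous_fderiv (by simp)).clm_apply continuous_const

/-- Smooth finite maximum. -/
theorem aux_max {d : ℕ} {T : ℝ} {ι : Type*} [Fintype ι] {φ : ι → ℝ × (Fin d → ℝ) → ℝ}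
    (hφ : ∀ k, IsTestQT T (φ k)) {δ : ℝ} (hδ : 0 < δ) :
    ∃ ψ, IsTestQT T ψ ∧ (∀ k q, φ k q - δ ≤ ψ q) ∧
      ∀ q i, (dxi ψ q i) ^ 2 ≤ ∑ k, (dxi (φ k) q i) ^ 2 := by
  have hpos : ∀ q, 0 < ∑ k, (φ k q) ^ 2 + δ ^ 2 := fun q => by positivity
  have hsm : ContDiff ℝ (⊤ : ℕ∞) fun q => ∑ k, (φ k q) ^ 2 + δ ^ 2 :=
    (ContDiff.sum fun k _ => (hφ k).1.pow 2).add contDiff_const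
  refine ⟨fun q => √(∑ k, (φ k q) ^ 2 + δ ^ 2) - δ, ?_, ?_, ?_⟩
  · refine aux_test_of_zero hφ ?_ ?_
    · exact (hsm.sqrt fun q => (hpos q).ne').sub contDiff_const
    · intro q h
      simp [h, Real.sqrt_sq hδ.le]
  · intro k q
    have : φ k q ≤ √(∑ k, (φ k q) ^ 2 + δ ^ 2) := by
      apply Real.le_sqrt_of_sq_le
      have := Finset.single_le_sum (f := fun k => (φ k q)^2) (fun _ _ => sq_nonneg _)
        (Finset.mem_univ k)
      nlinarith [sq_nonneg δ]
    simpa using this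
  · intro q i
    have hd : ∀ k, HasFDerivAt (φ k) (fderiv ℝ (φ k) q) q := fun k =>
      ((hφ k).1.differentiable (by simp) q).hasFDerivAt
    have h1 : HasFDerivAt (fun q => ∑ k, (φ k q) ^ 2 + δ ^ 2)
        (∑ k, (2 * φ k q) • fderiv ℝ (φ k) q) q := by
      refine HasFDerivAt.add_const _ ?_
      refine HasFDerivAt.fun_sum fun k _ => ?_
      simpa using (hd k).pow 2
    have h2 := (h1.sqrt (hpos q).ne').sub_const δ
    unfold dxi
    rw [h2.fderiv]
    set R := ∑ k, (φ k q) ^ 2 + δ ^ 2 with hR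
    have hRp : 0 < R := hpos q
    simp only [_root_.smul_apply, _root_.sum_apply, smul_eq_mul]
    set D : ι → ℝ := fun k => fderiv ℝ (φ k) q (0, Pi.single i 1) with hD
    have e1 : ∑ k, 2 * φ k q * D k = 2 * ∑ k, φ k q * D k := by
      rw [Finset.mul_sum]; exact Finset.sum_congr rfl fun k _ => by ring
    have hCS : (∑ k, φ k q * D k) ^ 2 ≤ (∑ k, (φ k q) ^ 2) * ∑ k, (D k) ^ 2 :=
      Finset.sum_mul_sq_le_sq_mul_sq _ _ _
    have hDn : 0 ≤ ∑ k, (D k)^2 := Finset.sum_nonneg fun _ _ => sq_nonneg _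
    change (1 / (2 * √R) * ∑ k, 2 * φ k q * D k) ^ 2 ≤ ∑ k, (D k)^2
    rw [e1]
    have e2 : (1 / (2 * √R) * (2 * ∑ k, φ k q * D k)) ^ 2 = (∑ k, φ k q * D k)^2 / R := by
      have : √R ≠ 0 := (Real.sqrt_pos.2 hRp).ne'
      field_simp
      rw [Real.sq_sqrt hRp.le]; ring
    rw [e2, div_le_iff₀ hRp]
    nlinarith [mul_nonneg hDn (sq_nonneg δ)]

theorem aux_cap {d : ℕ} {T : ℝ} {φ : ℕ → ℝ × (Fin d → ℝ) → ℝ}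
    (hφ : ∀ k, IsTestQT T (φ k)) (Z : Set (ℝ × (Fin d → ℝ))) (hZ : Z ⊆ ⋃ k, {q | 1 ≤ φ k q}) :
    capBar T Z ≤ 16 * ∑' k, aux_G (φ k) := by
  unfold capBar
  refine iInf_le_of_le (⋃ k, {q | 1/2 < φ k q}) (iInf_le_of_le ?_ (iInf_le_of_le ?_ ?_))
  · exact isOpen_iUnion fun k => isOpen_lt continuous_const (hφ k).1.continuous
  · refine hZ.trans (iUnion_mono fun k q hq => ?_)
    simp only [mem_ofPred_eq] at hq ⊢; linarith
  · refine iSup_le fun K => iSup_le fun hK => iSup_le fun hKU => ?_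
    obtain ⟨t, ht⟩ := hK.elim_finite_subcover (fun k => {q | 1/2 < φ k q})
      (fun k => isOpen_lt continuous_const (hφ k).1.continuous) (hKU.trans inter_subset_left)
    obtain ⟨ψ, hψ, hge, hder⟩ := aux_max (ι := t) (φ := fun k => φ k) (fun k => hφ k)
      (δ := 1/4) (by norm_num)
    have hs := aux_smul hψ 4
    refine iInf_le_of_le (fun q => 4 * ψ q) (iInf_le_of_le hs.1 (iInf_le_of_le ?_ ?_))
    · intro q hq
      obtain ⟨k, hk, hkq⟩ := mem_iUnion₂.1 (ht hq)
      have := hge ⟨k, hk⟩ q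
      simp only [mem_ofPred_eq] at hkq this
      linarith
    · change aux_G _ ≤ _
      rw [aux_G_smul hψ]
      have h16 : ENNReal.ofReal (4^2) = 16 := by norm_num
      rw [h16]
      gcongr
      calc aux_G ψ ≤ ∫⁻ q, ∑ k : t, ENNReal.ofReal (∑ i, (dxi (φ k) q i) ^ 2) := by
            refine lintegral_mono fun q => ?_
            rw [← ENNReal.ofReal_sum_of_nonneg fun k _ => Finset.sum_nonneg fun _ _ => sq_nonneg _]
            apply ENNReal.ofReal_le_ofReal
            rw [Finset.sum_comm]
            exact Finset.sum_le_sum fun i _ => hder q i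
        _ = ∑ k : t, aux_G (φ k) := by
            rw [lintegral_finsetSum]
            · rfl
            · intro k _
              exact (continuous_finsetSum _ fun i _ =>
                (aux_dxi_cont (hφ k) i).pow 2).measurable.ennreal_ofReal
        _ = ∑ k ∈ t, aux_G (φ k) := Finset.sum_coe_sort t fun k => aux_G (φ k)
        _ ≤ _ := ENNReal.sum_le_tsum t

theorem aux_layer {d : ℕ} {T : ℝ} (ν : Measure (ℝ × (Fin d → ℝ)))
    (F : Set (ℝ × (Fin d → ℝ))) (c : ℝ≥0∞)
    (hdom : ∀ ψ, IsTestQT T ψ → ν ({q | 1 ≤ ψ q} ∩ F) ≤ c * aux_G ψ)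
    {ψ : ℝ × (Fin d → ℝ) → ℝ} (hψ : IsTestQT T ψ) {N : ℝ} (hN : 0 < N)
    (hG : aux_G ψ ≤ ENNReal.ofReal (N^2)) :
    ∫⁻ q in F, ENNReal.ofReal (ψ q) ∂ν ≤ (ν F + c) * ENNReal.ofReal N := by
  have hm : Measurable ψ := hψ.1.continuous.measurable
  have h1 : ∫⁻ q in F, ENNReal.ofReal (ψ q) ∂ν
      = ∫⁻ q in F, ENNReal.ofReal (max (ψ q) 0) ∂ν := by
    congr 1; ext q
    rcases le_total (ψ q) 0 with h | h
    · simp [h]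
    · simp [h]
  rw [h1, lintegral_eq_lintegral_meas_le (ν.restrict F) (f := fun q => max (ψ q) 0) (ae_of_all _ fun q => le_max_right _ _)
    (hm.max measurable_const).aemeasurable]
  have hbd : ∀ t > 0, ν.restrict F {a | t ≤ max (ψ a) 0} ≤ c * ENNReal.ofReal (N^2 * t ^ (-2:ℝ)) := by
    intro t ht
    have e : {a | t ≤ max (ψ a) 0} = {q | 1 ≤ t⁻¹ * ψ q} := by
      ext q
      simp only [mem_ofPred_eq, le_max_iff, not_le.2 ht, or_false]
      rw [inv_mul_eq_div, le_div_iff₀ ht, one_mul]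
    rw [e, Measure.restrict_apply (measurableSet_le measurable_const (hm.const_mul _))]
    refine (hdom _ (aux_smul hψ t⁻¹).1).trans ?_
    rw [aux_G_smul hψ]
    gcongr
    calc ENNReal.ofReal (t⁻¹ ^ 2) * aux_G ψ ≤ ENNReal.ofReal (t⁻¹ ^ 2) * ENNReal.ofReal (N^2) := by
          gcongr
      _ = _ := by
        rw [← ENNReal.ofReal_mul (by positivity)]
        congr 1
        rw [Real.rpow_neg ht.le, mul_comm]
        norm_num
  rw [← Ioc_union_Ioi_eq_Ioi hN.le, lintegral_union measurableSet_Ioi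
    (Set.disjoint_left.2 fun x hx hx' => not_lt.2 hx.2 hx'), add_mul]
  gcongr
  · calc ∫⁻ t in Ioc 0 N, ν.restrict F {a | t ≤ max (ψ a) 0} ≤ ∫⁻ t in Ioc 0 N, ν F := by
          refine lintegral_mono fun t => ?_
          exact (measure_mono (subset_univ _)).trans (by simp)
      _ = _ := by simp
  · calc ∫⁻ t in Ioi N, ν.restrict F {a | t ≤ max (ψ a) 0}
        ≤ ∫⁻ t in Ioi N, c * ENNReal.ofReal (N^2 * t ^ (-2:ℝ)) :=
          setLIntegral_mono' measurableSet_Ioi fun t ht => hbd t (hN.trans ht)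
      _ = c * ENNReal.ofReal N := by
        rw [lintegral_const_mul _ (by fun_prop)]
        congr 1
        rw [← ofReal_integral_eq_lintegral_ofReal]
        · rw [integral_const_mul, integral_Ioi_rpow_of_lt (by norm_num) hN]
          congr 1
          norm_num
          rw [Real.rpow_neg hN.le]
          field_simp
          simp
        · exact (integrableOn_Ioi_rpow_of_lt (by norm_num) hN).const_mul _
        · refine (ae_restrict_iff' measurableSet_Ioi).2 (ae_of_all _ fun t ht => ?_)
          have : 0 < t := hN.trans ht
          positivity

theorem aux_fa {V H : Type*} [AddCommGroup V] [Module ℝ V] [NormedAddCommGroup H]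
    [InnerProductSpace ℝ H] [CompleteSpace H] (L : V →ₗ[ℝ] H) (l : V →ₗ[ℝ] ℝ) (M : ℝ)
    (hM : ∀ v, |l v| ≤ M * ‖L v‖) : ∃ h : H, ∀ v, l v = inner ℝ h (L v) := by
  obtain ⟨g, hg⟩ := L.rangeRestrict.exists_rightInverse_of_surjective
    (LinearMap.range_eq_top.2 L.surjective_rangeRestrict)
  have hg' : ∀ y, L (g y) = (y : H) := fun y => by
    have := congrArg Subtype.val (LinearMap.congr_fun hg y)
    simpa using this
  let f : StrongDual ℝ (LinearMap.range L) := (l ∘ₗ g).mkContinuous M fun y => by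
    have := hM (g y)
    rw [hg'] at this
    simpa using this
  obtain ⟨F, hF, -⟩ := exists_extension_norm_eq (LinearMap.range L) f
  refine ⟨(InnerProductSpace.toDual ℝ H).symm F, fun v => ?_⟩
  rw [InnerProductSpace.toDual_symm_apply]
  have h1 := hF ⟨L v, LinearMap.mem_range_self L v⟩
  simp only at h1
  rw [h1]
  change l v = l (g ⟨L v, _⟩)
  have h2 := hM (v - g ⟨L v, LinearMap.mem_range_self L v⟩)
  rw [map_sub, map_sub, hg'] at h2
  simp only [sub_self, norm_zero, mul_zero] at h2
  have := abs_nonpos_iff.1 h2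
  linarith

theorem aux_rho_pos {d : ℕ} (αe : ℝ) (x : Fin d → ℝ) : 0 < rho αe x := by
  unfold rho
  have : 0 ≤ ∑ i, (x i)^2 := Finset.sum_nonneg fun _ _ => sq_nonneg _
  positivity

theorem aux_rho_smooth {d : ℕ} (αe : ℝ) : ContDiff ℝ (⊤ : ℕ∞) (rho (d := d) αe) := by
  unfold rho
  refine ContDiff.rpow_const_of_ne ?_ fun x => ?_
  · fun_prop
  · have : 0 ≤ ∑ i, (x i)^2 := Finset.sum_nonneg fun _ _ => sq_nonneg _
    positivity

/-- partial derivative of `ρ²`. -/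
def aux_r {d : ℕ} (αe : ℝ) (i : Fin d) (q : ℝ × (Fin d → ℝ)) : ℝ :=
  fderiv ℝ (fun y : Fin d → ℝ => (rho αe y) ^ 2) q.2 (Pi.single i 1)

theorem aux_r_cont {d : ℕ} (αe : ℝ) (i : Fin d) : Continuous (aux_r αe i) := by
  unfold aux_r
  exact ((((aux_rho_smooth αe).pow 2).continuous_fderiv (by simp)).comp continuous_snd).clm_apply
    continuous_const

theorem aux_rho_cont {d : ℕ} (αe : ℝ) :
    Continuous fun q : ℝ × (Fin d → ℝ) => rho αe q.2 :=
  (aux_rho_smooth αe).continuous.comp continuous_snd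

/-- The weighted vector of `φ` and its derivatives. -/
def aux_lam {d : ℕ} (αe : ℝ) (φ : ℝ × (Fin d → ℝ) → ℝ) (q : ℝ × (Fin d → ℝ)) :
    EuclideanSpace ℝ (Option (Fin d)) :=
  WithLp.toLp 2 fun o => o.elim (φ q * rho αe q.2)
    fun i => ((rho αe q.2)^2 * dxi φ q i + φ q * aux_r αe i q) / rho αe q.2

theorem aux_dxi_zero {d : ℕ} {φ : ℝ × (Fin d → ℝ) → ℝ} {q : ℝ × (Fin d → ℝ)}
    (hq : q ∉ tsupport φ) (i : Fin d) : dxi φ q i = 0 := by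
  unfold dxi
  have : fderiv ℝ φ q = 0 := by
    by_contra h
    exact hq (support_fderiv_subset ℝ h)
  simp [this]

theorem aux_lam_cont {d : ℕ} {T : ℝ} (αe : ℝ) {φ : ℝ × (Fin d → ℝ) → ℝ} (hφ : IsTestQT T φ) :
    Continuous (aux_lam αe φ) := by
  unfold aux_lam
  refine (PiLp.continuous_toLp 2 _).comp (continuous_pi fun o => ?_)
  cases o with
  | none => exact hφ.1.continuous.mul (aux_rho_cont αe)
  | some i =>
    exact ((((aux_rho_cont αe).pow 2).mul (aux_dxi_cont hφ i)).add
      (hφ.1.continuous.mul (aux_r_cont αe i))).div (aux_rho_cont αe)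
      fun q => (aux_rho_pos αe q.2).ne'

theorem aux_lam_supp {d : ℕ} {T : ℝ} (αe : ℝ) {φ : ℝ × (Fin d → ℝ) → ℝ} (hφ : IsTestQT T φ) :
    HasCompactSupport (aux_lam αe φ) := by
  refine HasCompactSupport.intro hφ.2.1 fun q hq => ?_
  have h0 : φ q = 0 := image_eq_zero_of_notMem_tsupport hq
  ext o
  cases o with
  | none => simp [aux_lam, h0]
  | some i => simp [aux_lam, h0, aux_dxi_zero hq]

theorem aux_lam_memLp {d : ℕ} {T : ℝ} (αe : ℝ) {φ : ℝ × (Fin d → ℝ) → ℝ} (hφ : IsTestQT T φ)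
    (S : Set (ℝ × (Fin d → ℝ))) :
    MemLp (aux_lam αe φ) 2 (volume.restrict S) :=
  ((aux_lam_cont αe hφ).memLp_of_hasCompactSupport (aux_lam_supp αe hφ)).restrict S

theorem aux_mul_test {d : ℕ} {T : ℝ} {χ φ : ℝ × (Fin d → ℝ) → ℝ} (hχ : IsTestQT T χ)
    (hφ : IsTestQT T φ) : IsTestQT T (fun q => χ q * φ q) ∧
      ∀ q i, dxi (fun q => χ q * φ q) q i = χ q * dxi φ q i + φ q * dxi χ q i := by
  constructor
  · exact aux_test_of_zero (ι := Unit) (φ := fun _ => φ) (fun _ => hφ)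
      (hχ.1.mul hφ.1) (fun q h => by simp [h ()])
  · intro q i
    unfold dxi
    rw [fderiv_fun_mul (hχ.1.differentiable (by simp) q) (hφ.1.differentiable (by simp) q)]
    rfl

theorem aux_add_test {d : ℕ} {T : ℝ} {χ φ : ℝ × (Fin d → ℝ) → ℝ} (hχ : IsTestQT T χ)
    (hφ : IsTestQT T φ) : IsTestQT T (χ + φ) ∧
      ∀ q i, dxi (χ + φ) q i = dxi χ q i + dxi φ q i := by
  constructor
  · exact aux_test_of_zero (ι := Bool) (φ := fun b => if b then φ else χ)
      (fun b => by cases b <;> simpa) (hχ.1.add hφ.1)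
      (fun q h => by
        have h1 := h true
        have h2 := h false
        simp at h1 h2
        simp [h1, h2])
  · intro q i
    unfold dxi
    rw [fderiv_add (hχ.1.differentiable (by simp) q) (hφ.1.differentiable (by simp) q)]
    rfl

theorem aux_exists_cutoff {d : ℕ} {T : ℝ} {C : Set (ℝ × (Fin d → ℝ))} (hC : IsCompact C)
    (hCs : C ⊆ Ioo (0:ℝ) T ×ˢ (univ : Set (Fin d → ℝ))) :
    ∃ χ, IsTestQT T χ ∧ ∀ q ∈ C, χ q = 1 := by
  obtain ⟨L, hL, hCL, hLs⟩ := exists_compact_between hC (isOpen_Ioo.prod isOpen_univ) hCs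
  obtain ⟨f, hf0, hf1, -⟩ := exists_contMDiffMap_zero_one_of_isClosed (n := (⊤ : ℕ∞))
    (modelWithCornersSelf ℝ (ℝ × (Fin d → ℝ)))
    (s := (interior L)ᶜ) (t := C) isOpen_interior.isClosed_compl hC.isClosed
    (Set.disjoint_left.2 fun x hx hx' => hx (hCL hx'))
  have hsupp : tsupport f ⊆ L := by
    refine closure_minimal (fun q hq => ?_) hL.isClosed
    by_contra hcon
    exact hq (hf0 fun h => hcon (interior_subset h))
  refine ⟨f, ⟨f.contMDiff.contDiff, hL.of_isClosed_subset (isClosed_tsupport _) hsupp,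
    hsupp.trans hLs⟩, fun q hq => hf1 hq⟩

theorem aux_cut {d : ℕ} {T : ℝ} (αe : ℝ) {C : Set (ℝ × (Fin d → ℝ))} (hC : IsCompact C)
    (hCs : C ⊆ Ioo (0:ℝ) T ×ˢ (univ : Set (Fin d → ℝ))) :
    ∃ K : ℝ, 0 ≤ K ∧ ∀ φ, IsTestQT T φ → ∃ ψ, IsTestQT T ψ ∧ (∀ q ∈ C, ψ q = φ q) ∧
      aux_G ψ ≤ ENNReal.ofReal K * ∫⁻ q in Icc (0:ℝ) T ×ˢ (univ : Set (Fin d → ℝ)),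
        ENNReal.ofReal (‖aux_lam αe φ q‖ ^ 2) := by
  obtain ⟨χ, hχ, hχ1⟩ := aux_exists_cutoff hC hCs
  have hne : ∀ q : ℝ × (Fin d → ℝ), rho αe q.2 ≠ 0 := fun q => (aux_rho_pos αe q.2).ne'
  let a : ℝ × (Fin d → ℝ) → ℝ := fun q => χ q / rho αe q.2
  let b : Fin d → ℝ × (Fin d → ℝ) → ℝ := fun i q =>
    dxi χ q i / rho αe q.2 - χ q * aux_r αe i q / (rho αe q.2) ^ 3
  let B : ℝ × (Fin d → ℝ) → ℝ := fun q => (a q) ^ 2 + ∑ i, (b i q) ^ 2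
  have hac : Continuous a := hχ.1.continuous.div (aux_rho_cont αe) hne
  have hbc : ∀ i, Continuous (b i) := fun i =>
    ((aux_dxi_cont hχ i).div (aux_rho_cont αe) hne).sub
      ((hχ.1.continuous.mul (aux_r_cont αe i)).div ((aux_rho_cont αe).pow 3)
        fun q => pow_ne_zero 3 (hne q))
  have hBc : Continuous B := (hac.pow 2).add (continuous_finsetSum _ fun i _ => (hbc i).pow 2)
  have hBs : HasCompactSupport B := HasCompactSupport.intro hχ.2.1 fun q hq => by
    have h0 : χ q = 0 := image_eq_zero_of_notMem_tsupport hq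
    simp [B, a, b, h0, aux_dxi_zero hq]
  obtain ⟨M, hM⟩ := hBc.bounded_above_of_compact_support hBs
  have hBM : ∀ q, B q ≤ M := fun q => (le_abs_self _).trans (hM q)
  have hB0 : ∀ q, 0 ≤ B q := fun q =>
    add_nonneg (sq_nonneg _) (Finset.sum_nonneg fun _ _ => sq_nonneg _)
  have hM0 : 0 ≤ M := (hB0 0).trans (hBM 0)
  refine ⟨2 * M * (d + 1), by positivity, fun φ hφ => ?_⟩
  obtain ⟨hψ, hder⟩ := aux_mul_test hχ hφ
  refine ⟨_, hψ, fun q hq => by simp [hχ1 q hq], ?_⟩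
  have hS : MeasurableSet (Icc (0:ℝ) T ×ˢ (univ : Set (Fin d → ℝ))) :=
    measurableSet_Icc.prod MeasurableSet.univ
  rw [← lintegral_const_mul' _ _ (by simp), ← lintegral_indicator hS]
  unfold aux_G
  refine lintegral_mono fun q => ?_
  by_cases hq : q ∈ Icc (0:ℝ) T ×ˢ (univ : Set (Fin d → ℝ))
  · rw [indicator_of_mem hq, ← ENNReal.ofReal_mul (by positivity)]
    apply ENNReal.ofReal_le_ofReal
    let u : ℝ := φ q * rho αe q.2
    let L : Fin d → ℝ := fun i =>
      ((rho αe q.2)^2 * dxi φ q i + φ q * aux_r αe i q) / rho αe q.2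
    have hnorm : ‖aux_lam αe φ q‖ ^ 2 = u ^ 2 + ∑ i, (L i) ^ 2 := by
      rw [EuclideanSpace.norm_sq_eq, Fintype.sum_option]
      simp only [Real.norm_eq_abs, sq_abs]
      rfl
    have hstep : ∀ i, (dxi (fun q => χ q * φ q) q i) ^ 2 ≤ 2 * M * (u ^ 2 + ∑ i, (L i) ^ 2) := by
      intro i
      have e : dxi (fun q => χ q * φ q) q i = a q * L i + b i q * u := by
        rw [hder]
        simp only [a, b, L, u]
        have := hne q
        field_simp
        ring
      have ha : (a q) ^ 2 ≤ M := le_trans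
        (le_add_of_nonneg_right (Finset.sum_nonneg fun _ _ => sq_nonneg _)) (hBM q)
      have hb : (b i q) ^ 2 ≤ M := by
        have h1 := Finset.single_le_sum (f := fun i => (b i q)^2) (fun _ _ => sq_nonneg _)
          (Finset.mem_univ i)
        have h2 : (b i q)^2 ≤ B q := h1.trans (le_add_of_nonneg_left (sq_nonneg _))
        exact h2.trans (hBM q)
      have hL := Finset.single_le_sum (f := fun i => (L i)^2) (fun _ _ => sq_nonneg _)
          (Finset.mem_univ i)
      rw [e]
      have h3 : (a q)^2 * (L i)^2 ≤ M * ∑ i, (L i)^2 :=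
        mul_le_mul ha hL (sq_nonneg _) hM0
      have h4 : (b i q)^2 * u^2 ≤ M * u^2 := mul_le_mul_of_nonneg_right hb (sq_nonneg _)
      nlinarith [sq_nonneg (a q * L i - b i q * u)]
    rw [hnorm]
    refine (Finset.sum_le_sum fun i _ => hstep i).trans ?_
    have hpos : 0 ≤ 2 * M * (u ^ 2 + ∑ i, (L i) ^ 2) := by positivity
    simp only [Finset.sum_const, Finset.card_univ, Fintype.card_fin, nsmul_eq_mul]
    nlinarith
  · have hq' : q ∉ tsupport φ := fun h => hq (by
      have := hφ.2.2 h
      exact ⟨Ioo_subset_Icc_self this.1, mem_univ _⟩)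
    have h0 : φ q = 0 := image_eq_zero_of_notMem_tsupport hq'
    simp [hder, h0, aux_dxi_zero hq']

theorem aux_test_integrable {d : ℕ} {T : ℝ} {φ : ℝ × (Fin d → ℝ) → ℝ} (hφ : IsTestQT T φ)
    (γ : Measure (ℝ × (Fin d → ℝ))) [IsFiniteMeasureOnCompacts γ] : Integrable φ γ :=
  hφ.1.continuous.integrable_of_hasCompactSupport hφ.2.1

/-- The space of test functions. -/
def aux_V (d : ℕ) (T : ℝ) : Submodule ℝ (ℝ × (Fin d → ℝ) → ℝ) where
  carrier := {φ | IsTestQT T φ}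
  add_mem' h1 h2 := (aux_add_test h1 h2).1
  zero_mem' := aux_test_of_zero (ι := Empty) (φ := fun _ => 0) (fun b => b.elim)
    contDiff_const (fun _ _ => rfl)
  smul_mem' c _ h := (aux_smul h c).1

theorem aux_riesz {d : ℕ} (T αe : ℝ) (γ : Measure (ℝ × (Fin d → ℝ)))
    [IsFiniteMeasureOnCompacts γ] (M : ℝ)
    (hM : ∀ φ, IsTestQT T φ → |∫ q, φ q ∂γ| ≤ M * (eLpNorm (aux_lam αe φ) 2
      (volume.restrict (Icc (0:ℝ) T ×ˢ (univ : Set (Fin d → ℝ))))).toReal) :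
    MeasureRepHminus T αe γ := by
  set m : Measure (ℝ × (Fin d → ℝ)) :=
    volume.restrict (Icc (0:ℝ) T ×ˢ (univ : Set (Fin d → ℝ))) with hm
  let L : aux_V d T →ₗ[ℝ] Lp (EuclideanSpace ℝ (Option (Fin d))) 2 m :=
    { toFun := fun φ => (aux_lam_memLp αe φ.2 _).toLp (aux_lam αe φ)
      map_add' := by
        intro φ ψ
        rw [← MemLp.toLp_add]
        apply MemLp.toLp_congr
        refine ae_of_all _ fun q => ?_
        ext o
        cases o with
        | none => simp [aux_lam]; ring
        | some i => simp [aux_lam, (aux_add_test φ.2 ψ.2).2]; ring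
      map_smul' := by
        intro c φ
        rw [RingHom.id_apply, ← MemLp.toLp_const_smul]
        apply MemLp.toLp_congr
        refine ae_of_all _ fun q => ?_
        ext o
        have h := (aux_smul φ.2 c).2
        cases o with
        | none => simp [aux_lam]; ring
        | some i =>
          have h' : dxi (c • (φ : ℝ × (Fin d → ℝ) → ℝ)) q i = c * dxi φ q i := h q i
          simp [aux_lam, h']; ring }
  let l : aux_V d T →ₗ[ℝ] ℝ :=
    { toFun := fun φ => ∫ q, (φ : ℝ × (Fin d → ℝ) → ℝ) q ∂γ
      map_add' := fun φ ψ => integral_add (aux_test_integrable φ.2 γ) (aux_test_integrable ψ.2 γ)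
      map_smul' := fun c φ => integral_const_mul c _ }
  obtain ⟨h, hh⟩ := aux_fa L l M fun φ => by
    have := hM φ φ.2
    rw [show ‖L φ‖ = _ from Lp.norm_toLp _ (aux_lam_memLp αe φ.2 _)]
    exact this
  have hhm : Measurable (h : ℝ × (Fin d → ℝ) → EuclideanSpace ℝ (Option (Fin d))) :=
    (Lp.stronglyMeasurable h).measurable
  have hcm : ∀ o, Measurable fun q => h q o := fun o =>
    (PiLp.continuous_apply 2 _ o).measurable.comp hhm
  have hcL : ∀ o, MemLp (fun q => h q o) 2 m := fun o =>
    (Lp.memLp h).mono (hcm o).aestronglyMeasurable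
      (ae_of_all _ fun q => PiLp.norm_apply_le (h q) o)
  have hrm : Measurable fun q : ℝ × (Fin d → ℝ) => rho αe q.2 := (aux_rho_cont αe).measurable
  have hne : ∀ q : ℝ × (Fin d → ℝ), rho αe q.2 ≠ 0 := fun q => (aux_rho_pos αe q.2).ne'
  have hmem : ∀ o, MemLp (fun q => h q o) 2 m → MemL2rho T αe
      (fun t x => h (t, x) o / rho αe x) := by
    intro o ho
    refine ⟨(hcm o).div hrm, ?_⟩
    have h1 := ho.integrable_sq
    have h2 := h1.lintegral_lt_top
    refine lt_of_le_of_lt (lintegral_mono fun q => ?_) h2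
    apply ENNReal.ofReal_le_ofReal
    rw [div_mul_cancel₀ _ (hne q)]
    simp
  refine ⟨fun t x => h (t, x) none / rho αe x, fun t x i => -(h (t, x) (some i) / rho αe x),
    hmem none (hcL none), fun i => ?_, fun φ hφ => ?_⟩
  · have := hmem (some i) (hcL _)
    refine ⟨this.1.neg, ?_⟩
    have h2 := this.2
    simpa [neg_mul, abs_neg] using h2
  · have h1 := hh ⟨φ, hφ⟩
    change ∫ q, φ q ∂γ = _ at h1
    rw [h1, L2.inner_def]
    have hLm := aux_lam_memLp (T := T) αe hφ (Icc (0:ℝ) T ×ˢ (univ : Set (Fin d → ℝ)))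
    have hcoe : (L ⟨φ, hφ⟩ : ℝ × (Fin d → ℝ) → EuclideanSpace ℝ (Option (Fin d)))
        =ᵐ[m] aux_lam αe φ := hLm.coeFn_toLp
    have hlc : ∀ o, MemLp (fun q => aux_lam αe φ q o) 2 m := fun o =>
      hLm.mono ((PiLp.continuous_apply 2 _ o).comp (aux_lam_cont αe hφ)).aestronglyMeasurable
        (ae_of_all _ fun q => PiLp.norm_apply_le (aux_lam αe φ q) o)
    have hintg : ∀ o, Integrable (fun q => h q o * aux_lam αe φ q o) m := fun o =>
      (hcL o).integrable_mul (hlc o)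
    have e1 : ∫ q, inner ℝ (h q) ((L ⟨φ, hφ⟩ : Lp (EuclideanSpace ℝ (Option (Fin d))) 2 m) q) ∂m
        = (∫ q, h q none * aux_lam αe φ q none ∂m)
          + ∫ q, ∑ i : Fin d, h q (some i) * aux_lam αe φ q (some i) ∂m := by
      rw [← integral_add (hintg none) (integrable_finsetSum _ fun i _ => hintg (some i))]
      refine integral_congr_ae ?_
      filter_upwards [hcoe] with q hq
      rw [hq, PiLp.inner_apply, Fintype.sum_option]
      simp [mul_comm]
    rw [e1]
    unfold pairingTest pairing
    rw [sub_eq_add_neg, ← integral_neg]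
    congr 1
    · refine integral_congr_ae (ae_of_all _ fun q => ?_)
      simp only [aux_lam, Option.elim]
      have := hne q
      field_simp
    · refine integral_congr_ae (ae_of_all _ fun q => ?_)
      simp only
      rw [← Finset.sum_neg_distrib]
      refine Finset.sum_congr rfl fun i _ => ?_
      simp only [aux_lam, Option.elim, aux_r]
      have := hne q
      field_simp

theorem aux_sq {X E : Type*} [MeasurableSpace X] [NormedAddCommGroup E] (m : Measure X)
    (f : X → E) : ∫⁻ q, ENNReal.ofReal (‖f q‖ ^ 2) ∂m = (eLpNorm f 2 m) ^ 2 := by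
  rw [eLpNorm_eq_lintegral_rpow_enorm_toReal (by simp) (by simp)]
  rw [← ENNReal.rpow_natCast, ← ENNReal.rpow_mul]
  simp only [ENNReal.toReal_ofNat]
  norm_num

theorem aux_bound {d : ℕ} {T : ℝ} (αe : ℝ) (ν : Measure (ℝ × (Fin d → ℝ)))
    [IsFiniteMeasureOnCompacts ν]
    {C : Set (ℝ × (Fin d → ℝ))} (hC : IsCompact C)
    (hCs : C ⊆ Ioo (0:ℝ) T ×ˢ (univ : Set (Fin d → ℝ)))
    {F : Set (ℝ × (Fin d → ℝ))} (hF : MeasurableSet F) (hFC : F ⊆ C) (c : ℝ≥0∞) (hc : c ≠ ⊤)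
    (hdom : ∀ ψ, IsTestQT T ψ → ν ({q | 1 ≤ ψ q} ∩ F) ≤ c * aux_G ψ) :
    ∃ D : ℝ≥0∞, D ≠ ⊤ ∧ ∀ φ, IsTestQT T φ →
      ∫⁻ q in F, ENNReal.ofReal (φ q) ∂ν ≤ D * eLpNorm (aux_lam αe φ) 2
        (volume.restrict (Icc (0:ℝ) T ×ˢ (univ : Set (Fin d → ℝ)))) := by
  obtain ⟨K, hK0, hK⟩ := aux_cut αe hC hCs
  have hνF : ν F ≠ ⊤ := ((measure_mono hFC).trans_lt hC.measure_lt_top).ne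
  have hfin : ν F + c ≠ ⊤ := ENNReal.add_ne_top.2 ⟨hνF, hc⟩
  refine ⟨(ν F + c) * ENNReal.ofReal (√K), ENNReal.mul_ne_top hfin (by simp), fun φ hφ => ?_⟩
  obtain ⟨ψ, hψ, hψφ, hG⟩ := hK φ hφ
  set e := eLpNorm (aux_lam αe φ) 2
        (volume.restrict (Icc (0:ℝ) T ×ˢ (univ : Set (Fin d → ℝ)))) with he
  have hefin : e ≠ ⊤ := (aux_lam_memLp αe hφ _).eLpNorm_ne_top
  rw [aux_sq, ← he] at hG
  have hintg : ∫⁻ q in F, ENNReal.ofReal (φ q) ∂ν = ∫⁻ q in F, ENNReal.ofReal (ψ q) ∂ν :=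
    setLIntegral_congr_fun hF fun q hq => by simp only [hψφ q (hFC hq)]
  rw [hintg]
  have heE : e = ENNReal.ofReal e.toReal := (ENNReal.ofReal_toReal hefin).symm
  have hE0 : 0 ≤ e.toReal := ENNReal.toReal_nonneg
  generalize e.toReal = E at heE hE0
  have hkey : ∀ ε > (0:ℝ), ∫⁻ q in F, ENNReal.ofReal (ψ q) ∂ν ≤
      (ν F + c) * ENNReal.ofReal (√K * E + ε) := by
    intro ε hε
    refine aux_layer ν F c hdom hψ (by positivity) (hG.trans ?_)
    rw [heE, ← ENNReal.ofReal_pow hE0, ← ENNReal.ofReal_mul hK0]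
    apply ENNReal.ofReal_le_ofReal
    have h1 : K * E ^ 2 = (√K * E)^2 := by rw [mul_pow, Real.sq_sqrt hK0]
    rw [h1]
    have : 0 ≤ √K * E := by positivity
    gcongr
    linarith
  have hlim : Tendsto (fun ε : ℝ => (ν F + c) * ENNReal.ofReal (√K * E + ε)) (𝓝[>] 0)
      (𝓝 ((ν F + c) * ENNReal.ofReal (√K * E + 0))) := by
    refine ENNReal.Tendsto.const_mul ?_ (Or.inr hfin)
    refine ENNReal.tendsto_ofReal ?_
    exact (tendsto_const_nhds.add tendsto_id).mono_left nhdsWithin_le_nhds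
  have := ge_of_tendsto hlim (eventually_mem_nhdsWithin.mono fun ε hε => hkey ε hε)
  rw [heE, mul_assoc, ← ENNReal.ofReal_mul (Real.sqrt_nonneg _)]
  simpa using this

theorem aux_piece {d : ℕ} {T : ℝ} (ν : Measure (ℝ × (Fin d → ℝ)))
    [IsFiniteMeasureOnCompacts ν]
    (hν : ∀ B : Set (ℝ × (Fin d → ℝ)), MeasurableSet B →
      B ⊆ Ioo (0:ℝ) T ×ˢ (univ : Set (Fin d → ℝ)) → capBar T B = 0 → ν B = 0)
    {C : Set (ℝ × (Fin d → ℝ))} (hC : IsCompact C)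
    (hCs : C ⊆ Ioo (0:ℝ) T ×ˢ (univ : Set (Fin d → ℝ))) :
    ∃ F : ℕ → Set (ℝ × (Fin d → ℝ)), (∀ n, MeasurableSet (F n)) ∧ (∀ n, F n ⊆ C) ∧
      ν (C \ ⋃ n, F n) = 0 ∧
      ∀ n ψ, IsTestQT T ψ → ν ({q | 1 ≤ ψ q} ∩ F n) ≤ ((n : ℝ≥0∞) + 1) * aux_G ψ := by
  have hCfin : ν C < ⊤ := hC.measure_lt_top
  have : IsFiniteMeasure (ν.restrict C) := ⟨by simpa using hCfin⟩
  have hAm : ∀ φ : aux_V d T, MeasurableSet {q | 1 ≤ (φ : ℝ × (Fin d → ℝ) → ℝ) q} := fun φ =>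
    measurableSet_le measurable_const φ.2.1.continuous.measurable
  have hG0 : aux_G (0 : ℝ × (Fin d → ℝ) → ℝ) = 0 := by
    have := aux_G_smul (aux_V d T).zero_mem 0
    simpa [show (fun _ : ℝ × (Fin d → ℝ) => (0:ℝ)) = 0 from rfl] using this
  have key := fun n : ℕ => aux_greedy (ν.restrict C)
    (fun φ : aux_V d T => {q | 1 ≤ (φ : ℝ × (Fin d → ℝ) → ℝ) q}) hAm
    (fun φ => aux_G (φ : ℝ × (Fin d → ℝ) → ℝ)) 0 hG0 ((n : ℝ≥0∞) + 1)
  choose s hs1 hs2 using key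
  have hBm : ∀ n, MeasurableSet (⋃ k, {q | 1 ≤ (s n k : ℝ × (Fin d → ℝ) → ℝ) q}) := fun n =>
    MeasurableSet.iUnion fun k => hAm _
  refine ⟨fun n => C \ ⋃ k, {q | 1 ≤ (s n k : ℝ × (Fin d → ℝ) → ℝ) q},
    fun n => hC.measurableSet.diff (hBm n), fun n => sdiff_subset, ?_, ?_⟩
  · have hm : MeasurableSet
        (C \ ⋃ n, (C \ ⋃ k, {q | 1 ≤ (s n k : ℝ × (Fin d → ℝ) → ℝ) q})) :=
      hC.measurableSet.diff (MeasurableSet.iUnion fun n => hC.measurableSet.diff (hBm n))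
    refine hν _ hm (sdiff_subset.trans hCs) ?_
    have hle : ∀ n : ℕ, ((n : ℝ≥0∞) + 1) * capBar T
        (C \ ⋃ n, (C \ ⋃ k, {q | 1 ≤ (s n k : ℝ × (Fin d → ℝ) → ℝ) q})) ≤ 16 * ν C := by
      intro n
      have h1 := aux_cap (T := T) (φ := fun k => (s n k : ℝ × (Fin d → ℝ) → ℝ))
        (fun k => (s n k).2)
        (C \ ⋃ n, (C \ ⋃ k, {q | 1 ≤ (s n k : ℝ × (Fin d → ℝ) → ℝ) q})) (by
          intro q hq
          by_contra hcon
          exact hq.2 (mem_iUnion.2 ⟨n, hq.1, hcon⟩))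
      have h2 := hs1 n
      rw [ENNReal.tsum_mul_left, Measure.restrict_apply_univ] at h2
      calc _ ≤ ((n : ℝ≥0∞) + 1) * (16 * ∑' k, aux_G (s n k : ℝ × (Fin d → ℝ) → ℝ)) := by gcongr
        _ = 16 * (((n : ℝ≥0∞) + 1) * ∑' k, aux_G (s n k : ℝ × (Fin d → ℝ) → ℝ)) := by ring
        _ ≤ _ := by gcongr
    generalize capBar T _ = x at hle
    by_contra hx
    have hA : 16 * ν C ≠ ⊤ := ENNReal.mul_ne_top (by simp) hCfin.ne
    obtain ⟨n, hn⟩ := ENNReal.exists_nat_mul_gt hx hA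
    exact absurd (hn.trans_le ((by gcongr; exact le_self_add :
      (n : ℝ≥0∞) * x ≤ ((n : ℝ≥0∞) + 1) * x).trans (hle n))) (lt_irrefl _)
  · intro n ψ hψ
    have := hs2 n ⟨ψ, hψ⟩
    rw [Measure.restrict_apply ((hAm _).diff (hBm n))] at this
    refine le_trans (measure_mono ?_) this
    rintro q ⟨h1, h2, h3⟩
    exact ⟨⟨h1, h3⟩, h2⟩

theorem aux_exhaust (d : ℕ) (T : ℝ) : ∃ C : ℕ → Set (ℝ × (Fin d → ℝ)),
    (∀ n, IsCompact (C n)) ∧ (⋃ n, C n) = Ioo (0:ℝ) T ×ˢ (univ : Set (Fin d → ℝ)) := by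
  have ho : IsOpen (Ioo (0:ℝ) T ×ˢ (univ : Set (Fin d → ℝ))) := isOpen_Ioo.prod isOpen_univ
  have h : IsSigmaCompact (Ioo (0:ℝ) T ×ˢ (univ : Set (Fin d → ℝ))) := by
    have := ho.locallyCompactSpace
    exact isSigmaCompact_iff_sigmaCompactSpace.2 inferInstance
  exact h

theorem aux_core {d : ℕ} (T αe : ℝ) (ν : Measure (ℝ × (Fin d → ℝ)))
    [IsFiniteMeasureOnCompacts ν]
    (hν : ∀ B : Set (ℝ × (Fin d → ℝ)), MeasurableSet B →
      B ⊆ Ioo (0:ℝ) T ×ˢ (univ : Set (Fin d → ℝ)) → capBar T B = 0 → ν B = 0) :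
    ∃ θ : ℝ × (Fin d → ℝ) → ℝ≥0∞, Measurable θ ∧ (∀ q, θ q ≤ 1) ∧ (∀ᵐ q ∂ν, θ q ≠ 0) ∧
      MeasureRepHminus T αe (ν.withDensity θ) := by
  classical
  obtain ⟨C, hC, hCU⟩ := aux_exhaust d T
  have hCs : ∀ n, C n ⊆ Ioo (0:ℝ) T ×ˢ (univ : Set (Fin d → ℝ)) := fun n =>
    hCU ▸ subset_iUnion C n
  choose F hFm hFC hFnull hdom using fun m => aux_piece ν hν (hC m) (hCs m)
  choose D hDfin hD using fun m n => aux_bound (T := T) αe ν (hC m) (hCs m) (hFm m n) (hFC m n)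
    ((n : ℝ≥0∞) + 1) (by simp) (hdom m n)
  obtain ⟨ε, hε, hεs⟩ := ENNReal.exists_pos_sum_of_countable' (one_ne_zero : (1:ℝ≥0∞) ≠ 0) (ℕ × ℕ)
  have hstrip : MeasurableSet (Ioo (0:ℝ) T ×ˢ (univ : Set (Fin d → ℝ))) :=
    measurableSet_Ioo.prod MeasurableSet.univ
  let w : ℕ × ℕ → ℝ≥0∞ := fun p => ε p / (1 + D p.1 p.2)
  have h1D : ∀ p : ℕ × ℕ, 1 + D p.1 p.2 ≠ ⊤ := fun p =>
    ENNReal.add_ne_top.2 ⟨by simp, hDfin _ _⟩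
  have hw0 : ∀ p, w p ≠ 0 := fun p => (ENNReal.div_pos (hε p).ne' (h1D p)).ne'
  have hwε : ∀ p, w p ≤ ε p := fun p => ENNReal.div_le_of_le_mul (by
    calc ε p = ε p * 1 := (mul_one _).symm
      _ ≤ _ := by gcongr; exact le_self_add)
  have hwD : ∀ p : ℕ × ℕ, w p * D p.1 p.2 ≤ ε p := fun p => by
    calc w p * D p.1 p.2 ≤ w p * (1 + D p.1 p.2) := by gcongr; exact le_add_self
      _ = ε p := ENNReal.div_mul_cancel (by simp) (h1D p)
  let g : ℕ × ℕ → ℝ × (Fin d → ℝ) → ℝ≥0∞ := fun p => (F p.1 p.2).indicator fun _ => w p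
  have hgm : ∀ p, Measurable (g p) := fun p => measurable_const.indicator (hFm _ _)
  let θ0 : ℝ × (Fin d → ℝ) → ℝ≥0∞ := fun q => ∑' p, g p q
  have hθ0m : Measurable θ0 := Measurable.tsum hgm
  let θ : ℝ × (Fin d → ℝ) → ℝ≥0∞ :=
    (Ioo (0:ℝ) T ×ˢ (univ : Set (Fin d → ℝ))).piecewise θ0 (fun _ => 1)
  have hθm : Measurable θ := Measurable.piecewise hstrip hθ0m measurable_const
  have hθ1 : ∀ q, θ q ≤ 1 := by
    intro q
    by_cases hq : q ∈ Ioo (0:ℝ) T ×ˢ (univ : Set (Fin d → ℝ))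
    · simp only [θ, piecewise_eq_of_mem _ _ _ hq]
      refine (ENNReal.tsum_le_tsum fun p => ?_).trans hεs.le
      exact (indicator_le_self' (fun _ _ => zero_le) q).trans (hwε p)
    · simp only [θ, piecewise_eq_of_notMem _ _ _ hq, le_refl]
  have hfc : IsFiniteMeasureOnCompacts (ν.withDensity θ) := ⟨fun K hK => by
    rw [withDensity_apply _ hK.measurableSet]
    calc ∫⁻ q in K, θ q ∂ν ≤ ∫⁻ q in K, 1 ∂ν := lintegral_mono fun q => hθ1 q
      _ = ν K := by simp
      _ < ⊤ := hK.measure_lt_top⟩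
  refine ⟨θ, hθm, hθ1, ?_, ?_⟩
  · have hnull : ∀ᵐ q ∂ν, ∀ m, q ∉ C m \ ⋃ n, F m n := by
      rw [ae_all_iff]
      exact fun m => measure_eq_zero_iff_ae_notMem.1 (hFnull m)
    filter_upwards [hnull] with q hq
    by_cases hqs : q ∈ Ioo (0:ℝ) T ×ˢ (univ : Set (Fin d → ℝ))
    · simp only [θ, piecewise_eq_of_mem _ _ _ hqs]
      rw [← hCU] at hqs
      obtain ⟨m, hm⟩ := mem_iUnion.1 hqs
      have h1 : q ∈ ⋃ n, F m n := by
        by_contra hcon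
        exact hq m ⟨hm, hcon⟩
      obtain ⟨n, hn⟩ := mem_iUnion.1 h1
      intro h0
      have h2 := ENNReal.tsum_eq_zero.1 h0 (m, n)
      simp only [g, indicator_of_mem hn] at h2
      exact hw0 _ h2
    · simp only [θ, piecewise_eq_of_notMem _ _ _ hqs]
      exact one_ne_zero
  · have hup : ∀ φ, IsTestQT T φ → ∫⁻ q, ENNReal.ofReal (φ q) ∂(ν.withDensity θ) ≤
        eLpNorm (aux_lam αe φ) 2
        (volume.restrict (Icc (0:ℝ) T ×ˢ (univ : Set (Fin d → ℝ)))) := by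
      intro φ hφ
      have hφm : Measurable fun q => ENNReal.ofReal (φ q) :=
        hφ.1.continuous.measurable.ennreal_ofReal
      rw [lintegral_withDensity_eq_lintegral_mul _ hθm hφm]
      have e1 : ∀ q, (θ * fun q => ENNReal.ofReal (φ q)) q
          = ∑' p, (F p.1 p.2).indicator (fun q => w p * ENNReal.ofReal (φ q)) q := by
        intro q
        by_cases hqs : q ∈ Ioo (0:ℝ) T ×ˢ (univ : Set (Fin d → ℝ))
        · simp only [Pi.mul_apply, θ, piecewise_eq_of_mem _ _ _ hqs, θ0]
          rw [← ENNReal.tsum_mul_right]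
          refine tsum_congr fun p => ?_
          simp only [g, indicator_apply]
          split_ifs <;> simp
        · have h0 : φ q = 0 :=
            image_eq_zero_of_notMem_tsupport fun h => hqs (hφ.2.2 h)
          simp [Pi.mul_apply, h0, indicator_apply]
      rw [lintegral_congr e1, lintegral_tsum fun p =>
        ((hφm.const_mul _).indicator (hFm _ _)).aemeasurable]
      set e := eLpNorm (aux_lam αe φ) 2
        (volume.restrict (Icc (0:ℝ) T ×ˢ (univ : Set (Fin d → ℝ)))) with he
      calc _ ≤ ∑' p, ε p * e := by
            refine ENNReal.tsum_le_tsum fun p => ?_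
            rw [lintegral_indicator (hFm _ _), lintegral_const_mul _ hφm]
            calc _ ≤ w p * (D p.1 p.2 * e) := by gcongr; exact hD p.1 p.2 φ hφ
              _ = w p * D p.1 p.2 * e := (mul_assoc _ _ _).symm
              _ ≤ _ := by gcongr; exact hwD p
        _ = (∑' p, ε p) * e := ENNReal.tsum_mul_right
        _ ≤ 1 * e := by gcongr
        _ = e := one_mul _
    refine aux_riesz T αe _ 1 fun φ hφ => ?_
    rw [one_mul]
    have hefin := (aux_lam_memLp αe hφ (Icc (0:ℝ) T ×ˢ (univ : Set (Fin d → ℝ)))).eLpNorm_ne_top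
    have hone : ∀ φ, IsTestQT T φ → ∫ q, φ q ∂(ν.withDensity θ) ≤ (eLpNorm (aux_lam αe φ) 2
        (volume.restrict (Icc (0:ℝ) T ×ˢ (univ : Set (Fin d → ℝ))))).toReal := by
      intro φ hφ
      have hefin := (aux_lam_memLp αe hφ
        (Icc (0:ℝ) T ×ˢ (univ : Set (Fin d → ℝ)))).eLpNorm_ne_top
      rw [integral_eq_lintegral_pos_part_sub_lintegral_neg_part (aux_test_integrable hφ _)]
      have := ENNReal.toReal_mono hefin (hup φ hφ)
      have h2 : 0 ≤ (∫⁻ q, ENNReal.ofReal (-φ q) ∂(ν.withDensity θ)).toReal :=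
        ENNReal.toReal_nonneg
      linarith
    rw [abs_le]
    refine ⟨?_, hone φ hφ⟩
    have hneg := hone _ (aux_smul hφ (-1)).1
    have e2 : aux_lam αe (fun q => -1 * φ q) = -aux_lam αe φ := by
      ext q o
      cases o with
      | none => simp [aux_lam]
      | some i =>
        have h := (aux_smul hφ (-1)).2 q i
        simp only [aux_lam, Option.elim, h, Pi.neg_apply, PiLp.neg_apply]
        ring
    rw [e2, eLpNorm_neg, integral_const_mul] at hneg
    linarith

theorem aux_half {d : ℕ} (T αe : ℝ) (ν : Measure (ℝ × (Fin d → ℝ)))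
    [IsFiniteMeasureOnCompacts ν]
    (hν : ∀ B : Set (ℝ × (Fin d → ℝ)), MeasurableSet B →
      B ⊆ Ioo (0:ℝ) T ×ˢ (univ : Set (Fin d → ℝ)) → capBar T B = 0 → ν B = 0) :
    ∃ (γ : Measure (ℝ × (Fin d → ℝ))) (α : ℝ × (Fin d → ℝ) → ℝ),
      IsFiniteMeasureOnCompacts γ ∧ MeasureRepHminus T αe γ ∧ Measurable α ∧ (∀ q, 0 ≤ α q) ∧
      ∀ B, MeasurableSet B → ∫⁻ q in B, ENNReal.ofReal (α q) ∂γ = ν B := by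
  obtain ⟨θ, hθm, hθ1, hθ0, hrep⟩ := aux_core T αe ν hν
  refine ⟨ν.withDensity θ, fun q => (θ q).toReal⁻¹, ⟨fun K hK => ?_⟩, hrep,
    hθm.ennreal_toReal.inv, fun q => inv_nonneg.2 ENNReal.toReal_nonneg, fun B hB => ?_⟩
  · rw [withDensity_apply _ hK.measurableSet]
    calc ∫⁻ q in K, θ q ∂ν ≤ ∫⁻ q in K, 1 ∂ν := lintegral_mono fun q => hθ1 q
      _ = ν K := by simp
      _ < ⊤ := hK.measure_lt_top
  · have hαm : Measurable fun q => ENNReal.ofReal ((θ q).toReal⁻¹) :=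
      (hθm.ennreal_toReal.inv).ennreal_ofReal
    change ∫⁻ q in B, ENNReal.ofReal ((θ q).toReal⁻¹) ∂ν.withDensity θ = ν B
    rw [setLIntegral_withDensity_eq_setLIntegral_mul _ hθm hαm hB]
    calc _ = ∫⁻ q in B, 1 ∂ν := by
          refine lintegral_congr_ae (ae_restrict_of_ae ?_)
          filter_upwards [hθ0] with q hq
          have hfin : θ q ≠ ⊤ := ((hθ1 q).trans_lt ENNReal.one_lt_top).ne
          simp only [Pi.mul_apply]
          rw [ENNReal.ofReal_inv_of_pos (ENNReal.toReal_pos hq hfin), ENNReal.ofReal_toReal hfin]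
          exact ENNReal.mul_inv_cancel hq hfin
      _ = ν B := by simp

theorem aux_cap_mono {d : ℕ} (T : ℝ) {A B : Set (ℝ × (Fin d → ℝ))} (h : A ⊆ B) :
    capBar T A ≤ capBar T B := by
  unfold capBar
  exact le_iInf fun U => le_iInf fun hU => le_iInf fun hBU =>
    iInf_le_of_le U (iInf_le_of_le hU (iInf_le_of_le (h.trans hBU) le_rfl))

theorem aux_jordan_null {d : ℕ} (T : ℝ) (mp mn lam : Measure (ℝ × (Fin d → ℝ)))
    [IsFiniteMeasureOnCompacts mp]
    (p n : ℝ × (Fin d → ℝ) → ℝ≥0∞) (hpm : Measurable p) (hnm : Measurable n)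
    (hp : lam.withDensity p = mp) (hn : lam.withDensity n = mn)
    (habs : ∀ B : Set (ℝ × (Fin d → ℝ)), MeasurableSet B →
      B ⊆ Ioo (0:ℝ) T ×ˢ (univ : Set (Fin d → ℝ)) → capBar T B = 0 → mp B = mn B)
    (B : Set (ℝ × (Fin d → ℝ))) (hB : MeasurableSet B)
    (hBs : B ⊆ Ioo (0:ℝ) T ×ˢ (univ : Set (Fin d → ℝ))) (hB0 : capBar T B = 0) :
    lam.withDensity (fun q => p q - n q) B = 0 := by
  have hdm : Measurable fun q => p q - n q := hpm.sub hnm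
  have hcov : B ⊆ {q | p q ≤ n q} ∪ ⋃ k : ℕ, ((B ∩ {q | n q < p q}) ∩ Metric.closedBall 0 k) := by
    intro q hq
    rcases le_or_gt (p q) (n q) with h | h
    · exact Or.inl h
    · obtain ⟨k, hk⟩ := exists_nat_ge (dist q 0)
      exact Or.inr (mem_iUnion.2 ⟨k, ⟨hq, h⟩, hk⟩)
  refine measure_mono_null hcov (measure_union_null ?_ (measure_iUnion_null fun k => ?_))
  · rw [withDensity_apply _ (measurableSet_le hpm hnm)]
    refine (setLIntegral_congr_fun (measurableSet_le hpm hnm) (g := fun _ => 0) ?_).trans (by simp)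
    intro q hq
    exact tsub_eq_zero_of_le hq
  · set A := (B ∩ {q | n q < p q}) ∩ Metric.closedBall 0 (k:ℝ) with hA
    have hAm : MeasurableSet A := (hB.inter (measurableSet_lt hnm hpm)).inter
      Metric.isClosed_closedBall.measurableSet
    have hAB : A ⊆ B := fun q hq => hq.1.1
    have hA0 : capBar T A = 0 := le_antisymm ((aux_cap_mono T hAB).trans hB0.le) zero_le
    have heq := habs A hAm (hAB.trans hBs) hA0
    have hfin : mp A ≠ ⊤ := ((measure_mono inter_subset_right).trans_lt
      (isCompact_closedBall (0 : ℝ × (Fin d → ℝ)) (k:ℝ)).measure_lt_top).ne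
    have hadd : mn A + lam.withDensity (fun q => p q - n q) A = mp A := by
      rw [← hn, ← hp, withDensity_apply _ hAm, withDensity_apply _ hAm, withDensity_apply _ hAm,
        ← lintegral_add_left hnm]
      refine setLIntegral_congr_fun hAm fun q hq => ?_
      exact add_tsub_cancel_of_le (le_of_lt hq.1.2)
    rw [← heq] at hadd
    have : mp A + lam.withDensity (fun q => p q - n q) A = mp A + 0 := by rw [hadd, add_zero]
    exact (ENNReal.add_right_inj hfin).1 this

/-- Theorem `decom`.
Let `μ = μp − μn` be a (signed) Radon measure on `Q_T` which is absolutely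
continuous with respect to the parabolic capacity `cap-bar`.  Then there exist
positive Radon measures `γ₁, γ₂` on `Q_T` belonging (as functionals) to
`𝕃₂(0,T;H⁻¹_ρ)` and nonnegative `α₁ ∈ 𝕃₁_loc(Q_T,γ₁)`, `α₂ ∈ 𝕃₁_loc(Q_T,γ₂)`
such that `dμ = α₁ dγ₁ − α₂ dγ₂`. -/
theorem statement1 {d : ℕ} (T αe : ℝ) (hT : 0 < T)
    (hrho : Integrable fun x : Fin d → ℝ => rho αe x)
    (μp μn : Measure (ℝ × (Fin d → ℝ)))
    (hμp : IsFiniteMeasureOnCompacts μp) (hμn : IsFiniteMeasureOnCompacts μn)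
    (habs : ∀ B : Set (ℝ × (Fin d → ℝ)), MeasurableSet B →
      B ⊆ Ioo (0:ℝ) T ×ˢ (univ : Set (Fin d → ℝ)) → capBar T B = 0 → μp B = μn B) :
    ∃ (γ1 γ2 : Measure (ℝ × (Fin d → ℝ))) (α1 α2 : ℝ × (Fin d → ℝ) → ℝ),
      IsFiniteMeasureOnCompacts γ1 ∧ IsFiniteMeasureOnCompacts γ2 ∧
      MeasureRepHminus T αe γ1 ∧ MeasureRepHminus T αe γ2 ∧
      Measurable α1 ∧ Measurable α2 ∧ (∀ q, 0 ≤ α1 q) ∧ (∀ q, 0 ≤ α2 q) ∧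
      (∀ K : Set (ℝ × (Fin d → ℝ)), IsCompact K →
        K ⊆ Icc (0:ℝ) T ×ˢ (univ : Set (Fin d → ℝ)) →
        (∫⁻ q in K, ENNReal.ofReal (α1 q) ∂γ1) < ⊤ ∧
        (∫⁻ q in K, ENNReal.ofReal (α2 q) ∂γ2) < ⊤) ∧
      ∀ B : Set (ℝ × (Fin d → ℝ)), MeasurableSet B → Bornology.IsBounded B →
        μp B + (∫⁻ q in B, ENNReal.ofReal (α2 q) ∂γ2)
          = μn B + ∫⁻ q in B, ENNReal.ofReal (α1 q) ∂γ1 := by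

  set L : Measure (ℝ × (Fin d → ℝ)) := μp + μn with hL
  have hLf : IsFiniteMeasureOnCompacts L := ⟨fun K hK => by
    rw [hL, Measure.add_apply]
    exact ENNReal.add_lt_top.2 ⟨hK.measure_lt_top, hK.measure_lt_top⟩⟩
  set p := μp.rnDeriv L with hpdef
  set n := μn.rnDeriv L with hndef
  have hpm : Measurable p := Measure.measurable_rnDeriv _ _
  have hnm : Measurable n := Measure.measurable_rnDeriv _ _
  have hp : L.withDensity p = μp := Measure.withDensity_rnDeriv_eq μp L
    (Measure.absolutelyContinuous_of_le (Measure.le_add_right le_rfl))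
  have hn : L.withDensity n = μn := Measure.withDensity_rnDeriv_eq μn L
    (Measure.absolutelyContinuous_of_le (Measure.le_add_left le_rfl))
  have hf1 : IsFiniteMeasureOnCompacts (L.withDensity fun q => p q - n q) := ⟨fun K hK => by
    refine lt_of_le_of_lt ?_ (hK.measure_lt_top (μ := μp))
    conv_rhs => rw [← hp]
    exact withDensity_mono (ae_of_all _ fun q => tsub_le_self) K⟩
  have hf2 : IsFiniteMeasureOnCompacts (L.withDensity fun q => n q - p q) := ⟨fun K hK => by
    refine lt_of_le_of_lt ?_ (hK.measure_lt_top (μ := μn))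
    conv_rhs => rw [← hn]
    exact withDensity_mono (ae_of_all _ fun q => tsub_le_self) K⟩
  obtain ⟨γ1, α1, hγ1, hr1, hm1, h01, hI1⟩ := aux_half T αe (L.withDensity fun q => p q - n q)
    (aux_jordan_null T μp μn L p n hpm hnm hp hn habs)
  obtain ⟨γ2, α2, hγ2, hr2, hm2, h02, hI2⟩ := aux_half T αe (L.withDensity fun q => n q - p q)
    (aux_jordan_null T μn μp L n p hnm hpm hn hp fun B h1 h2 h3 => (habs B h1 h2 h3).symm)
  refine ⟨γ1, γ2, α1, α2, hγ1, hγ2, hr1, hr2, hm1, hm2, h01, h02, fun K hK _ => ?_, fun B hB _ => ?_⟩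
  · rw [hI1 K hK.measurableSet, hI2 K hK.measurableSet]
    exact ⟨hK.measure_lt_top, hK.measure_lt_top⟩
  · rw [hI1 B hB, hI2 B hB]
    have hpB : μp B = ∫⁻ q in B, p q ∂L := by rw [← withDensity_apply _ hB, hp]
    have hnB : μn B = ∫⁻ q in B, n q ∂L := by rw [← withDensity_apply _ hB, hn]
    rw [hpB, hnB, withDensity_apply _ hB, withDensity_apply _ hB, ← lintegral_add_left hpm,
      ← lintegral_add_left hnm]
    refine lintegral_congr fun q => ?_
    rw [add_tsub_eq_max, add_tsub_eq_max, max_comm]
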